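/- arXiv:2411.13126 — 2 statements merged into one kernel-verified Lean document; each statement's English description precedes it below -/
import Mathlib

section
/- Let u ∈ USC(Γ) (respectively u ∈ LSC(Γ)) and φ ∈ C^1(Γ) be such that u − φ has a local maximum (respectively minimum) at x ∈ \bar{E}_i for some i. Then for every index i with x ∈ \bar{E}_i, the limit I_i u(x) := lim_{δ↓0} I_i[B_δ^c(x)] u(x) exists in the extended reals, and moreover I_i u(x) ∈ [−∞, +∞) (respectively I_i u(x) ∈ (−∞, +∞]). -/
open Set MeasureTheory Filter Topology

namespace Junction

variable {N : ℕ}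

/-- Geodesic distance between the point with coordinate `x` on edge `i` and the point with
coordinate `z` on edge `j` of the junction. -/
noncomputable def rho (i j : Fin N) (x z : ℝ) : ℝ := if i = j then |x - z| else x + z

/-- The edge functions agree at the junction point `O` (coordinate `0` on every edge). -/
def Compat (u : Fin N → ℝ → ℝ) : Prop := ∀ i j : Fin N, u i 0 = u j 0

/-- Lévy-type bounds (with constants `Λ`, `σ`) on the kernels `ν i j`. -/
def KernelBounds (a : Fin N → ℝ) (ν : Fin N → Fin N → ℝ → ℝ → ℝ) (Λ σ : ℝ) : Prop :=
  ∀ i j : Fin N, ∀ x ∈ Icc (0 : ℝ) (a i), ∀ y ∈ Icc (0 : ℝ) (a i), ∀ r : ℝ, 0 < r →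
    0 ≤ ν i j x r ∧ ν i j x r ≤ Λ / r ^ (1 + σ) ∧
      |ν i j x r - ν i j y r| ≤ Λ * |x - y| / r ^ (1 + σ)

/-- Truncated nonlocal operator `I_i[A] u (x)`, integrating over the region `A j ⊆ J_j`
of each edge `j`. -/
noncomputable def Itr (a : Fin N → ℝ) (ν : Fin N → Fin N → ℝ → ℝ → ℝ)
    (u : Fin N → ℝ → ℝ) (i : Fin N) (x : ℝ) (A : Fin N → Set ℝ) : ℝ :=
  ∑ j : Fin N, ∫ z in Ioo (0 : ℝ) (a j) ∩ A j, (u j z - u i x) * ν i j x (rho i j x z)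

/-- The full nonlocal operator `I_i u (x)`. -/
noncomputable def Iop (a : Fin N → ℝ) (ν : Fin N → Fin N → ℝ → ℝ → ℝ)
    (u : Fin N → ℝ → ℝ) (i : Fin N) (x : ℝ) : ℝ :=
  Itr a ν u i x fun _ => univ

/-- Coordinates of the geodesic ball of radius `δ` around the point `x` of edge `i`. -/
def ball (i : Fin N) (x δ : ℝ) : Fin N → Set ℝ := fun j => {z | rho i j x z < δ}

/-- Coordinates of the complement of the geodesic ball of radius `δ`. -/
def ballc (i : Fin N) (x δ : ℝ) : Fin N → Set ℝ := fun j => {z | δ ≤ rho i j x z}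

/-- First derivative (within the edge) of the edge functions. -/
noncomputable def d1 (a : Fin N → ℝ) (φ : Fin N → ℝ → ℝ) (i : Fin N) : ℝ → ℝ :=
  derivWithin (φ i) (Icc 0 (a i))

/-- Second derivative (within the edge) of the edge functions. -/
noncomputable def d2 (a : Fin N → ℝ) (φ : Fin N → ℝ → ℝ) (i : Fin N) : ℝ → ℝ :=
  derivWithin (d1 a φ i) (Icc 0 (a i))

def C1Fun (a : Fin N → ℝ) (φ : Fin N → ℝ → ℝ) : Prop :=
  Compat φ ∧ ∀ i, ContDiffOn ℝ 1 (φ i) (Icc 0 (a i))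

def C2Fun (a : Fin N → ℝ) (φ : Fin N → ℝ → ℝ) : Prop :=
  Compat φ ∧ ∀ i, ContDiffOn ℝ 2 (φ i) (Icc 0 (a i))

def USCFun (a : Fin N → ℝ) (u : Fin N → ℝ → ℝ) : Prop :=
  Compat u ∧ ∀ i, UpperSemicontinuousOn (u i) (Icc 0 (a i))

def LSCFun (a : Fin N → ℝ) (u : Fin N → ℝ → ℝ) : Prop :=
  Compat u ∧ ∀ i, LowerSemicontinuousOn (u i) (Icc 0 (a i))

def ContFun (a : Fin N → ℝ) (u : Fin N → ℝ → ℝ) : Prop :=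
  Compat u ∧ ∀ i, ContinuousOn (u i) (Icc 0 (a i))

def BddFun (a : Fin N → ℝ) (u : Fin N → ℝ → ℝ) : Prop :=
  ∃ M : ℝ, ∀ i, ∀ x ∈ Icc (0 : ℝ) (a i), |u i x| ≤ M

/-- `u - φ` has a maximum over the geodesic ball `B_δ` at the point `x` of edge `i`. -/
def IsMaxOnBall (a : Fin N → ℝ) (u φ : Fin N → ℝ → ℝ) (i : Fin N) (x δ : ℝ) : Prop :=
  ∀ j, ∀ z ∈ Icc (0 : ℝ) (a j), rho i j x z < δ → u j z - φ j z ≤ u i x - φ i x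

/-- `u - φ` has a minimum over the geodesic ball `B_δ` at the point `x` of edge `i`. -/
def IsMinOnBall (a : Fin N → ℝ) (u φ : Fin N → ℝ → ℝ) (i : Fin N) (x δ : ℝ) : Prop :=
  ∀ j, ∀ z ∈ Icc (0 : ℝ) (a j), rho i j x z < δ → u i x - φ i x ≤ u j z - φ j z

/-- Standing assumptions on the Hamiltonians `H_i` with constant `CH`. -/
def HBounds (a : Fin N → ℝ) (H : Fin N → ℝ → ℝ → ℝ) (CH : ℝ) : Prop :=
  (∀ i, ContinuousOn (fun q : ℝ × ℝ => H i q.1 q.2) (Icc 0 (a i) ×ˢ (univ : Set ℝ))) ∧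
  ∀ i, ∀ x ∈ Icc (0 : ℝ) (a i), ∀ y ∈ Icc (0 : ℝ) (a i), ∀ p q : ℝ,
    |H i x p - H i y p| ≤ CH * (1 + |p|) * |x - y| ∧
    |H i x p - H i x q| ≤ CH * |p - q| ∧
    CH⁻¹ * |p| - CH ≤ H i x p ∧ H i x p ≤ CH * (1 + |p|)

/-- First-order truncated operator `G_i^δ(u, φ, p, x)`. -/
noncomputable def G (lam : ℝ) (a : Fin N → ℝ) (ν : Fin N → Fin N → ℝ → ℝ → ℝ)
    (H : Fin N → ℝ → ℝ → ℝ) (u φ : Fin N → ℝ → ℝ) (p : ℝ) (i : Fin N) (x δ : ℝ) : ℝ :=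
  lam * u i x - Itr a ν u i x (ballc i x δ) - Itr a ν φ i x (ball i x δ) + H i x p

/-- Second-order truncated operator with diffusion `mu` and right-hand side `f`. -/
noncomputable def G2 (lam : ℝ) (mu : Fin N → ℝ → ℝ) (a : Fin N → ℝ)
    (ν : Fin N → Fin N → ℝ → ℝ → ℝ) (H : Fin N → ℝ → ℝ → ℝ) (f : Fin N → ℝ → ℝ)
    (u φ : Fin N → ℝ → ℝ) (p : ℝ) (i : Fin N) (x δ : ℝ) : ℝ :=
  lam * u i x - mu i x * d2 a φ i x - Itr a ν u i x (ballc i x δ)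
    - Itr a ν φ i x (ball i x δ) + H i x p - f i x

/-- `u` has γ-Hölder edge functions with constant `K`. -/
def HolderEdge (a : Fin N → ℝ) (u : Fin N → ℝ → ℝ) (γ K : ℝ) : Prop :=
  ∀ i, ∀ x ∈ Icc (0 : ℝ) (a i), ∀ y ∈ Icc (0 : ℝ) (a i), |u i x - u i y| ≤ K * |x - y| ^ γ

/-- The truncated nonlocal operators converge, as `δ ↓ 0`, to the extended real `L`:
this is the definition of `I_i u (x) = L ∈ [-∞,+∞]`. -/
def HasNonlocalLimit (a : Fin N → ℝ) (ν : Fin N → Fin N → ℝ → ℝ → ℝ)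
    (u : Fin N → ℝ → ℝ) (i : Fin N) (x : ℝ) (L : EReal) : Prop :=
  Tendsto (fun δ : ℝ => ((Itr a ν u i x (ballc i x δ) : ℝ) : EReal)) (𝓝[>] (0 : ℝ)) (𝓝 L)

/-- `G_i(u, p, x) ≤ 0`, i.e. `λ u(x) + H_i(x,p) ≤ I_i u(x)` in the extended reals,
including the existence of the limit `I_i u (x)`. -/
def GLimLE (lam : ℝ) (a : Fin N → ℝ) (ν : Fin N → Fin N → ℝ → ℝ → ℝ)
    (H : Fin N → ℝ → ℝ → ℝ) (u : Fin N → ℝ → ℝ) (p : ℝ) (i : Fin N) (x : ℝ) : Prop :=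
  ∃ L : EReal, HasNonlocalLimit a ν u i x L ∧
    ((lam * u i x + H i x p : ℝ) : EReal) ≤ L

/-- `G_i(u, p, x) ≥ 0` in the extended reals, including the existence of `I_i u (x)`. -/
def GLimGE (lam : ℝ) (a : Fin N → ℝ) (ν : Fin N → Fin N → ℝ → ℝ → ℝ)
    (H : Fin N → ℝ → ℝ → ℝ) (u : Fin N → ℝ → ℝ) (p : ℝ) (i : Fin N) (x : ℝ) : Prop :=
  ∃ L : EReal, HasNonlocalLimit a ν u i x L ∧
    L ≤ ((lam * u i x + H i x p : ℝ) : EReal)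

/-- `p` belongs to the superdifferential of `u_i` at `x₀` (relative to `[0, a_i]`). -/
def SuperDiff (a : Fin N → ℝ) (u : Fin N → ℝ → ℝ) (i : Fin N) (x₀ p : ℝ) : Prop :=
  ∀ ε : ℝ, 0 < ε → ∃ δ : ℝ, 0 < δ ∧ ∀ x ∈ Icc (0 : ℝ) (a i), |x - x₀| < δ →
    u i x ≤ u i x₀ + p * (x - x₀) + ε * |x - x₀|

/-- `p` belongs to the subdifferential of `u_i` at `x₀` (relative to `[0, a_i]`). -/
def SubDiff (a : Fin N → ℝ) (u : Fin N → ℝ → ℝ) (i : Fin N) (x₀ p : ℝ) : Prop :=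
  ∀ ε : ℝ, 0 < ε → ∃ δ : ℝ, 0 < δ ∧ ∀ x ∈ Icc (0 : ℝ) (a i), |x - x₀| < δ →
    u i x₀ + p * (x - x₀) - ε * |x - x₀| ≤ u i x

/-- `(p_1,…,p_N)` belongs to the superdifferential `D^+_Γ u(O)` at the junction point. -/
def SuperDiffO (a : Fin N → ℝ) (u : Fin N → ℝ → ℝ) (p : Fin N → ℝ) : Prop :=
  ∀ i, SuperDiff a u i 0 (p i)

/-- `(p_1,…,p_N)` belongs to the subdifferential `D^-_Γ u(O)` at the junction point. -/
def SubDiffO (a : Fin N → ℝ) (u : Fin N → ℝ → ℝ) (p : Fin N → ℝ) : Prop :=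
  ∀ i, SubDiff a u i 0 (p i)

/-- The point with coordinate `x` on edge `i` lies in `Γ^δ`, i.e. at geodesic distance
greater than `δ` from every boundary vertex. -/
def InGammaDelta (a : Fin N → ℝ) (i : Fin N) (x δ : ℝ) : Prop :=
  x ∈ Icc (0 : ℝ) (a i) ∧ ∀ j, δ < rho i j x (a j)

/-- `u` is `K`-Lipschitz on `Γ^δ` for the geodesic distance. -/
def LipschitzOnGammaDelta (a : Fin N → ℝ) (u : Fin N → ℝ → ℝ) (δ K : ℝ) : Prop :=
  ∀ i, ∀ x, InGammaDelta a i x δ → ∀ j, ∀ z, InGammaDelta a j z δ →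
    |u i x - u j z| ≤ K * rho i j x z

/-- `u ∈ C^{2,β}(Γ)`. -/
def C2HolderFun (a : Fin N → ℝ) (β : ℝ) (u : Fin N → ℝ → ℝ) : Prop :=
  ContFun a u ∧ ∀ i, ContDiffOn ℝ 2 (u i) (Icc 0 (a i)) ∧
    ∃ K : ℝ, ∀ x ∈ Icc (0 : ℝ) (a i), ∀ y ∈ Icc (0 : ℝ) (a i),
      |d2 a u i x - d2 a u i y| ≤ K * |x - y| ^ β

/-- A `C^{2,β}`-type norm of `u`, used to express continuous dependence. -/
noncomputable def c2aDist (a : Fin N → ℝ) (β : ℝ) (u : Fin N → ℝ → ℝ) : ℝ :=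
  ∑ i : Fin N,
    (sSup ((fun x => |u i x|) '' Icc (0 : ℝ) (a i)) +
     sSup ((fun x => |d1 a u i x|) '' Icc (0 : ℝ) (a i)) +
     sSup ((fun x => |d2 a u i x|) '' Icc (0 : ℝ) (a i)) +
     sSup ((fun q : ℝ × ℝ => |d2 a u i q.1 - d2 a u i q.2| / |q.1 - q.2| ^ β) ''
       {q : ℝ × ℝ | q.1 ∈ Icc (0 : ℝ) (a i) ∧ q.2 ∈ Icc (0 : ℝ) (a i) ∧ q.1 ≠ q.2}))

/-- The constant `C₀` from the paper. -/
noncomputable def C0 (lam θ : ℝ) (a : Fin N → ℝ) (H : Fin N → ℝ → ℝ → ℝ)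
    (h : Fin N → ℝ) : ℝ :=
  (min lam 1)⁻¹ * ((⨆ i, sSup ((fun x => |H i x 0|) '' Icc (0 : ℝ) (a i))) + |θ| + ⨆ i, |h i|)

/-- The barrier profile `ψ_{L,δ}`. -/
noncomputable def psi (α L δ x : ℝ) : ℝ :=
  if x ≤ δ then L * (x - x ^ (1 + α)) else L * (δ - δ ^ (1 + α))

/-- Second-order viscosity subsolution inequalities inside the edges (with diffusion `mu`
and right-hand side `f`), tested with `C²` test functions. -/
def EdgeSub2 (lam : ℝ) (mu : Fin N → ℝ → ℝ) (a : Fin N → ℝ)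
    (ν : Fin N → Fin N → ℝ → ℝ → ℝ) (H : Fin N → ℝ → ℝ → ℝ) (f : Fin N → ℝ → ℝ)
    (u : Fin N → ℝ → ℝ) : Prop :=
  USCFun a u ∧ ∀ i, ∀ x ∈ Ioo (0 : ℝ) (a i), ∀ δ : ℝ, 0 < δ → ∀ φ, C2Fun a φ →
    IsMaxOnBall a u φ i x δ → G2 lam mu a ν H f u φ (d1 a φ i x) i x δ ≤ 0

/-- Second-order viscosity supersolution inequalities inside the edges. -/
def EdgeSuper2 (lam : ℝ) (mu : Fin N → ℝ → ℝ) (a : Fin N → ℝ)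
    (ν : Fin N → Fin N → ℝ → ℝ → ℝ) (H : Fin N → ℝ → ℝ → ℝ) (f : Fin N → ℝ → ℝ)
    (u : Fin N → ℝ → ℝ) : Prop :=
  LSCFun a u ∧ ∀ i, ∀ x ∈ Ioo (0 : ℝ) (a i), ∀ δ : ℝ, 0 < δ → ∀ φ, C2Fun a φ →
    IsMinOnBall a u φ i x δ → 0 ≤ G2 lam mu a ν H f u φ (d1 a φ i x) i x δ

section WithJunction

variable [NeZero N]

/-- Pointwise subsolution condition at an interior point of edge `i`. -/
def SubEdgePt (lam : ℝ) (a : Fin N → ℝ) (ν : Fin N → Fin N → ℝ → ℝ → ℝ)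
    (H : Fin N → ℝ → ℝ → ℝ) (u : Fin N → ℝ → ℝ) (i : Fin N) (x : ℝ) : Prop :=
  ∀ δ : ℝ, 0 < δ → ∀ φ, C1Fun a φ → IsMaxOnBall a u φ i x δ →
    G lam a ν H u φ (d1 a φ i x) i x δ ≤ 0

/-- Pointwise supersolution condition at an interior point of edge `i`. -/
def SuperEdgePt (lam : ℝ) (a : Fin N → ℝ) (ν : Fin N → Fin N → ℝ → ℝ → ℝ)
    (H : Fin N → ℝ → ℝ → ℝ) (u : Fin N → ℝ → ℝ) (i : Fin N) (x : ℝ) : Prop :=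
  ∀ δ : ℝ, 0 < δ → ∀ φ, C1Fun a φ → IsMinOnBall a u φ i x δ →
    0 ≤ G lam a ν H u φ (d1 a φ i x) i x δ

/-- Pointwise subsolution (Kirchhoff) condition at the junction point `O`. -/
def SubOPt (lam : ℝ) (a : Fin N → ℝ) (ν : Fin N → Fin N → ℝ → ℝ → ℝ)
    (H : Fin N → ℝ → ℝ → ℝ) (B : ℝ) (u : Fin N → ℝ → ℝ) : Prop :=
  ∀ δ : ℝ, 0 < δ → ∀ φ, C1Fun a φ → IsMaxOnBall a u φ 0 0 δ →
    (∃ i, G lam a ν H u φ (d1 a φ i 0) i 0 δ ≤ 0) ∨ (∑ i, -(d1 a φ i 0)) ≤ B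

/-- Pointwise supersolution (Kirchhoff) condition at the junction point `O`. -/
def SuperOPt (lam : ℝ) (a : Fin N → ℝ) (ν : Fin N → Fin N → ℝ → ℝ → ℝ)
    (H : Fin N → ℝ → ℝ → ℝ) (B : ℝ) (u : Fin N → ℝ → ℝ) : Prop :=
  ∀ δ : ℝ, 0 < δ → ∀ φ, C1Fun a φ → IsMinOnBall a u φ 0 0 δ →
    (∃ i, 0 ≤ G lam a ν H u φ (d1 a φ i 0) i 0 δ) ∨ B ≤ (∑ i, -(d1 a φ i 0))

/-- Pointwise subsolution (Dirichlet) condition at the boundary vertex `v̄_i`. -/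
def SubVPt (lam : ℝ) (a : Fin N → ℝ) (ν : Fin N → Fin N → ℝ → ℝ → ℝ)
    (H : Fin N → ℝ → ℝ → ℝ) (h : Fin N → ℝ) (u : Fin N → ℝ → ℝ) (i : Fin N) : Prop :=
  ∀ δ : ℝ, 0 < δ → ∀ φ, C1Fun a φ → IsMaxOnBall a u φ i (a i) δ →
    G lam a ν H u φ (d1 a φ i (a i)) i (a i) δ ≤ 0 ∨ u i (a i) ≤ h i

/-- Pointwise supersolution (Dirichlet) condition at the boundary vertex `v̄_i`. -/
def SuperVPt (lam : ℝ) (a : Fin N → ℝ) (ν : Fin N → Fin N → ℝ → ℝ → ℝ)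
    (H : Fin N → ℝ → ℝ → ℝ) (h : Fin N → ℝ) (u : Fin N → ℝ → ℝ) (i : Fin N) : Prop :=
  ∀ δ : ℝ, 0 < δ → ∀ φ, C1Fun a φ → IsMinOnBall a u φ i (a i) δ →
    0 ≤ G lam a ν H u φ (d1 a φ i (a i)) i (a i) δ ∨ h i ≤ u i (a i)

/-- Viscosity subsolution of the equation on the edges together with the Kirchhoff
condition at `O` (no boundary condition at the boundary vertices). -/
def KirchhoffSubNoBC (lam : ℝ) (a : Fin N → ℝ) (ν : Fin N → Fin N → ℝ → ℝ → ℝ)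
    (H : Fin N → ℝ → ℝ → ℝ) (B : ℝ) (u : Fin N → ℝ → ℝ) : Prop :=
  USCFun a u ∧ (∀ i, ∀ x ∈ Ioo (0 : ℝ) (a i), SubEdgePt lam a ν H u i x) ∧
    SubOPt lam a ν H B u

/-- Viscosity subsolution of the Kirchhoff problem (equation on the edges, Kirchhoff
condition at `O`, Dirichlet condition at the boundary vertices). -/
def KirchhoffSub (lam : ℝ) (a : Fin N → ℝ) (ν : Fin N → Fin N → ℝ → ℝ → ℝ)
    (H : Fin N → ℝ → ℝ → ℝ) (B : ℝ) (h : Fin N → ℝ) (u : Fin N → ℝ → ℝ) : Prop :=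
  KirchhoffSubNoBC lam a ν H B u ∧ ∀ i, SubVPt lam a ν H h u i

/-- Viscosity supersolution of the equation together with the Kirchhoff condition at `O`. -/
def KirchhoffSuperNoBC (lam : ℝ) (a : Fin N → ℝ) (ν : Fin N → Fin N → ℝ → ℝ → ℝ)
    (H : Fin N → ℝ → ℝ → ℝ) (B : ℝ) (u : Fin N → ℝ → ℝ) : Prop :=
  LSCFun a u ∧ (∀ i, ∀ x ∈ Ioo (0 : ℝ) (a i), SuperEdgePt lam a ν H u i x) ∧
    SuperOPt lam a ν H B u

/-- Viscosity supersolution of the Kirchhoff problem. -/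
def KirchhoffSuper (lam : ℝ) (a : Fin N → ℝ) (ν : Fin N → Fin N → ℝ → ℝ → ℝ)
    (H : Fin N → ℝ → ℝ → ℝ) (B : ℝ) (h : Fin N → ℝ) (u : Fin N → ℝ → ℝ) : Prop :=
  KirchhoffSuperNoBC lam a ν H B u ∧ ∀ i, SuperVPt lam a ν H h u i

/-- Viscosity subsolution of the viscous Dirichlet problem (vanishing viscosity `eps`,
Dirichlet data `θ` at `O` and `h i` at `v̄_i`, generalized boundary conditions). -/
def VDSub (lam eps θ : ℝ) (a : Fin N → ℝ) (ν : Fin N → Fin N → ℝ → ℝ → ℝ)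
    (H : Fin N → ℝ → ℝ → ℝ) (h : Fin N → ℝ) (u : Fin N → ℝ → ℝ) : Prop :=
  USCFun a u ∧
  (∀ i, ∀ x ∈ Ioo (0 : ℝ) (a i), ∀ δ : ℝ, 0 < δ → ∀ φ, C2Fun a φ →
    IsMaxOnBall a u φ i x δ →
    G2 lam (fun _ _ => eps) a ν H (fun _ _ => 0) u φ (d1 a φ i x) i x δ ≤ 0) ∧
  (∀ δ : ℝ, 0 < δ → ∀ φ, C2Fun a φ → IsMaxOnBall a u φ 0 0 δ →
    (∃ i, G2 lam (fun _ _ => eps) a ν H (fun _ _ => 0) u φ (d1 a φ i 0) i 0 δ ≤ 0) ∨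
      u 0 0 ≤ θ) ∧
  (∀ i, ∀ δ : ℝ, 0 < δ → ∀ φ, C2Fun a φ → IsMaxOnBall a u φ i (a i) δ →
    G2 lam (fun _ _ => eps) a ν H (fun _ _ => 0) u φ (d1 a φ i (a i)) i (a i) δ ≤ 0 ∨
      u i (a i) ≤ h i)

/-- Viscosity supersolution of the viscous Dirichlet problem. -/
def VDSuper (lam eps θ : ℝ) (a : Fin N → ℝ) (ν : Fin N → Fin N → ℝ → ℝ → ℝ)
    (H : Fin N → ℝ → ℝ → ℝ) (h : Fin N → ℝ) (u : Fin N → ℝ → ℝ) : Prop :=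
  LSCFun a u ∧
  (∀ i, ∀ x ∈ Ioo (0 : ℝ) (a i), ∀ δ : ℝ, 0 < δ → ∀ φ, C2Fun a φ →
    IsMinOnBall a u φ i x δ →
    0 ≤ G2 lam (fun _ _ => eps) a ν H (fun _ _ => 0) u φ (d1 a φ i x) i x δ) ∧
  (∀ δ : ℝ, 0 < δ → ∀ φ, C2Fun a φ → IsMinOnBall a u φ 0 0 δ →
    (∃ i, 0 ≤ G2 lam (fun _ _ => eps) a ν H (fun _ _ => 0) u φ (d1 a φ i 0) i 0 δ) ∨
      θ ≤ u 0 0) ∧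
  (∀ i, ∀ δ : ℝ, 0 < δ → ∀ φ, C2Fun a φ → IsMinOnBall a u φ i (a i) δ →
    0 ≤ G2 lam (fun _ _ => eps) a ν H (fun _ _ => 0) u φ (d1 a φ i (a i)) i (a i) δ ∨
      h i ≤ u i (a i))

end WithJunction

/-- The nonincreasing part `H⁻` of a convex Hamiltonian with minimum point `p0`. -/
noncomputable def Hminus (H : Fin N → ℝ → ℝ → ℝ) (p0 : Fin N → ℝ → ℝ) :
    Fin N → ℝ → ℝ → ℝ :=
  fun i x p => if p ≤ p0 i x then H i x (p0 i x) else H i x p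

/-- The nondecreasing part `H⁺` of a convex Hamiltonian with minimum point `p0`. -/
noncomputable def Hplus (H : Fin N → ℝ → ℝ → ℝ) (p0 : Fin N → ℝ → ℝ) :
    Fin N → ℝ → ℝ → ℝ :=
  fun i x p => if p ≤ p0 i x then H i x p else H i x (p0 i x)

/-- Each `H_i(x, ·)` is convex with unique minimum point `p0 i x`. -/
def ConvexUniqueMin (a : Fin N → ℝ) (H : Fin N → ℝ → ℝ → ℝ) (p0 : Fin N → ℝ → ℝ) : Prop :=
  ∀ i, ∀ x ∈ Icc (0 : ℝ) (a i),
    ConvexOn ℝ univ (fun p => H i x p) ∧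
    (∀ p : ℝ, H i x (p0 i x) ≤ H i x p) ∧
    ∀ p : ℝ, H i x p = H i x (p0 i x) → p = p0 i x

section FluxLimited

variable [NeZero N]

/-- The truncated flux limiter `FL^{-,δ}(u, φ, O)`. -/
noncomputable def FLdelta (lam : ℝ) (a : Fin N → ℝ) (ν : Fin N → Fin N → ℝ → ℝ → ℝ)
    (H : Fin N → ℝ → ℝ → ℝ) (p0 : Fin N → ℝ → ℝ) (B : ℝ)
    (u φ : Fin N → ℝ → ℝ) (δ : ℝ) : ℝ :=
  ⨅ p : Fin N → ℝ,
    max (⨆ i, G lam a ν (Hminus H p0) u φ (p i) i 0 δ) ((∑ i, -(p i)) - B)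

/-- Flux-limited subsolution condition at the junction point `O` (test-function form). -/
def FLSubO (lam : ℝ) (a : Fin N → ℝ) (ν : Fin N → Fin N → ℝ → ℝ → ℝ)
    (H : Fin N → ℝ → ℝ → ℝ) (p0 : Fin N → ℝ → ℝ) (B : ℝ) (u : Fin N → ℝ → ℝ) : Prop :=
  ∀ δ : ℝ, 0 < δ → ∀ φ, C1Fun a φ → IsMaxOnBall a u φ 0 0 δ →
    (∀ i, G lam a ν (Hplus H p0) u φ (d1 a φ i 0) i 0 δ ≤ 0) ∧
    FLdelta lam a ν H p0 B u φ δ ≤ 0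

/-- Flux-limited supersolution condition at the junction point `O` (test-function form). -/
def FLSuperO (lam : ℝ) (a : Fin N → ℝ) (ν : Fin N → Fin N → ℝ → ℝ → ℝ)
    (H : Fin N → ℝ → ℝ → ℝ) (p0 : Fin N → ℝ → ℝ) (B : ℝ) (u : Fin N → ℝ → ℝ) : Prop :=
  ∀ δ : ℝ, 0 < δ → ∀ φ, C1Fun a φ → IsMinOnBall a u φ 0 0 δ →
    (∃ i, 0 ≤ G lam a ν (Hplus H p0) u φ (d1 a φ i 0) i 0 δ) ∨
    0 ≤ FLdelta lam a ν H p0 B u φ δ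

/-- Viscosity flux-limited subsolution. -/
def FLSub (lam : ℝ) (a : Fin N → ℝ) (ν : Fin N → Fin N → ℝ → ℝ → ℝ)
    (H : Fin N → ℝ → ℝ → ℝ) (p0 : Fin N → ℝ → ℝ) (B : ℝ) (h : Fin N → ℝ)
    (u : Fin N → ℝ → ℝ) : Prop :=
  USCFun a u ∧ (∀ i, ∀ x ∈ Ioo (0 : ℝ) (a i), SubEdgePt lam a ν H u i x) ∧
    FLSubO lam a ν H p0 B u ∧ ∀ i, SubVPt lam a ν H h u i

/-- Viscosity flux-limited supersolution. -/
def FLSuper (lam : ℝ) (a : Fin N → ℝ) (ν : Fin N → Fin N → ℝ → ℝ → ℝ)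
    (H : Fin N → ℝ → ℝ → ℝ) (p0 : Fin N → ℝ → ℝ) (B : ℝ) (h : Fin N → ℝ)
    (u : Fin N → ℝ → ℝ) : Prop :=
  LSCFun a u ∧ (∀ i, ∀ x ∈ Ioo (0 : ℝ) (a i), SuperEdgePt lam a ν H u i x) ∧
    FLSuperO lam a ν H p0 B u ∧ ∀ i, SuperVPt lam a ν H h u i

/-- The flux limiter `FL^-(u, O)` in the extended reals, given the values
`L i = I_i u (O)` of the nonlocal operators at the junction. -/
noncomputable def FLlim (lam : ℝ) (H : Fin N → ℝ → ℝ → ℝ) (p0 : Fin N → ℝ → ℝ)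
    (B : ℝ) (u : Fin N → ℝ → ℝ) (L : Fin N → EReal) : EReal :=
  ⨅ p : Fin N → ℝ,
    max (⨆ i, (((lam * u i 0 + Hminus H p0 i 0 (p i) : ℝ) : EReal) - L i))
      (((∑ i, -(p i)) - B : ℝ) : EReal)

/-- Pointwise flux-limited subsolution condition at `O`, expressed through the
superdifferential `D^+_Γ u(O)` and the limits `I_i u(O)`. -/
def FLPointSubO (lam : ℝ) (a : Fin N → ℝ) (ν : Fin N → Fin N → ℝ → ℝ → ℝ)
    (H : Fin N → ℝ → ℝ → ℝ) (p0 : Fin N → ℝ → ℝ) (B : ℝ) (u : Fin N → ℝ → ℝ) : Prop :=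
  ∀ p : Fin N → ℝ, SuperDiffO a u p →
    ∃ L : Fin N → EReal, (∀ i, HasNonlocalLimit a ν u i 0 (L i)) ∧
      (∀ i, ((lam * u i 0 + Hplus H p0 i 0 (p i) : ℝ) : EReal) ≤ L i) ∧
      FLlim lam H p0 B u L ≤ 0

/-- Pointwise flux-limited supersolution condition at `O`. -/
def FLPointSuperO (lam : ℝ) (a : Fin N → ℝ) (ν : Fin N → Fin N → ℝ → ℝ → ℝ)
    (H : Fin N → ℝ → ℝ → ℝ) (p0 : Fin N → ℝ → ℝ) (B : ℝ) (u : Fin N → ℝ → ℝ) : Prop :=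
  ∀ p : Fin N → ℝ, SubDiffO a u p →
    ∃ L : Fin N → EReal, (∀ i, HasNonlocalLimit a ν u i 0 (L i)) ∧
      ((∃ i, L i ≤ ((lam * u i 0 + Hplus H p0 i 0 (p i) : ℝ) : EReal)) ∨
        0 ≤ FLlim lam H p0 B u L)

end FluxLimited

/-!
On the ball where `u - φ` is maximal the Lipschitz bound on `φ`, and outside it the bound on `u`,
give `u(z) - u(x) ≤ K ρ(x, z)`; so `[u(z) - u(x)] ν(x, ρ(x, z)) ≤ K Λ ρ(x, z)^{-σ}`, which is
integrable because `σ < 1`. Subtracting this integrable majorant leaves a nonpositive integrand,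
whose truncated integrals decrease as `δ ↓ 0` and hence converge to a limit below `+∞`.
The case of a minimum is the case of a maximum for `-u` and `-φ`.
-/

section Limits

variable {β : Type*} {F G : β → ℝ} {l : Filter β}

/-- The real-valued `F` converges along `l` to an extended real in `[-∞, +∞)`. -/
def TendstoNeTop (F : β → ℝ) (l : Filter β) : Prop :=
  ∃ L : EReal, Tendsto (fun b => (F b : EReal)) l (𝓝 L) ∧ L ≠ ⊤

theorem tendstoNeTop_of_tendsto {c : ℝ} (hF : Tendsto F l (𝓝 c)) : TendstoNeTop F l :=
  ⟨c, EReal.tendsto_coe.2 hF, EReal.coe_ne_top c⟩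

theorem tendstoNeTop_const (c : ℝ) : TendstoNeTop (fun _ => c) l :=
  tendstoNeTop_of_tendsto tendsto_const_nhds

theorem TendstoNeTop.congr' (hF : TendstoNeTop F l) (hFG : F =ᶠ[l] G) : TendstoNeTop G l :=
  let ⟨L, hL, hL_top⟩ := hF
  ⟨L, hL.congr' (hFG.fun_comp Real.toEReal), hL_top⟩

theorem TendstoNeTop.add (hF : TendstoNeTop F l) (hG : TendstoNeTop G l) :
    TendstoNeTop (fun b => F b + G b) l := by
  obtain ⟨L, hL, hL_top⟩ := hF
  obtain ⟨M, hM, hM_top⟩ := hG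
  have hadd : ContinuousAt (fun p : EReal × EReal => p.1 + p.2) (L, M) :=
    EReal.continuousAt_add (.inl hL_top) (.inr hM_top)
  exact ⟨L + M, hadd.tendsto.comp (hL.prodMk_nhds hM), EReal.add_ne_top hL_top hM_top⟩

theorem TendstoNeTop.sum {ι : Type*} {s : Finset ι} {F : ι → β → ℝ}
    (hF : ∀ j ∈ s, TendstoNeTop (F j) l) : TendstoNeTop (fun b => ∑ j ∈ s, F j b) l := by
  induction s using Finset.cons_induction with
  | empty => simpa only [Finset.sum_empty] using tendstoNeTop_const 0
  | cons j s hj ih =>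
    simp only [Finset.sum_cons]
    exact (hF j (s.mem_cons_self j)).add (ih fun k hk => hF k (Finset.mem_cons_of_mem hk))

theorem tendstoNeTop_nhdsGT_of_monotoneOn {F : ℝ → ℝ} {t : ℝ} (hF : MonotoneOn F (Ioi t)) :
    TendstoNeTop F (𝓝[>] t) := by
  have hF' : MonotoneOn (fun δ => (F δ : EReal)) (Ioi t) :=
    fun δ hδ ε hε hle => EReal.coe_le_coe_iff.2 (hF hδ hε hle)
  exact ⟨_, hF'.tendsto_nhdsGT (OrderBot.bddBelow _), ne_top_of_le_ne_top
    (EReal.coe_ne_top (F (t + 1))) (sInf_le (mem_image_of_mem _ (lt_add_one t)))⟩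

end Limits

section Integrals

variable {α : Type*} [MeasurableSpace α] {μ : Measure α} {s : ℝ → Set α} {t : ℝ} {f h : α → ℝ}

theorem tendstoNeTop_setIntegral_of_nonpos (hs : Antitone s)
    (hfi : ∀ δ > t, IntegrableOn f (s δ) μ) (hf : f ≤ᵐ[μ] 0) :
    TendstoNeTop (fun δ => ∫ z in s δ, f z ∂μ) (𝓝[>] t) := by
  refine tendstoNeTop_nhdsGT_of_monotoneOn fun δ hδ ε _ hle => ?_
  have hneg : ∫ z in s ε, -f z ∂μ ≤ ∫ z in s δ, -f z ∂μ :=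
    setIntegral_mono_set (hfi δ hδ).neg
      (ae_restrict_of_ae (hf.mono fun _ hz => neg_nonneg.2 hz)) (hs hle).eventuallyLE
  simpa only [integral_neg, neg_le_neg_iff] using hneg

theorem tendstoNeTop_setIntegral_of_le (hcover : AECover μ (𝓝[>] t) s) (hs : Antitone s)
    (hh : Integrable h μ) (hfh : f ≤ᵐ[μ] h) :
    TendstoNeTop (fun δ => ∫ z in s δ, f z ∂μ) (𝓝[>] t) := by
  by_cases hfi : ∀ δ > t, IntegrableOn f (s δ) μ
  · have hmajorant : TendstoNeTop (fun δ => ∫ z in s δ, h z ∂μ) (𝓝[>] t) :=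
      tendstoNeTop_of_tendsto (hcover.integral_tendsto_of_countably_generated hh)
    have hdiff : TendstoNeTop (fun δ => ∫ z in s δ, (f z - h z) ∂μ) (𝓝[>] t) :=
      tendstoNeTop_setIntegral_of_nonpos hs (fun δ hδ => (hfi δ hδ).sub hh.integrableOn)
        (hfh.mono fun _ hz => sub_nonpos.2 hz)
    refine (hmajorant.add hdiff).congr' ?_
    filter_upwards [self_mem_nhdsWithin] with δ hδ
    rw [integral_sub (hfi δ hδ) hh.integrableOn, add_sub_cancel]
  -- If `f` is not integrable on some `s δ₁`, the integrals over the larger sets are junk zeros.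
  · push Not at hfi
    obtain ⟨δ₁, hδ₁, hfi⟩ := hfi
    refine (tendstoNeTop_const 0).congr' ?_
    filter_upwards [Ioo_mem_nhdsGT hδ₁] with δ hδ
    exact (integral_undef fun hi => hfi (IntegrableOn.mono_set hi (hs hδ.2.le))).symm

theorem aecover_superlevel {r : α → ℝ} (hr : Measurable r) (hrt : ∀ᵐ z ∂μ, t < r z) :
    AECover μ (𝓝[>] t) fun δ => {z | δ ≤ r z} where
  ae_eventually_mem := hrt.mono fun _ hz =>
    mem_of_superset (Ioo_mem_nhdsGT hz) fun _ hδ => hδ.2.le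
  measurableSet _ := measurableSet_le measurable_const hr

theorem locallyIntegrable_norm_sub_rpow_neg {E : Type*} [NormedAddCommGroup E] [NormedSpace ℝ E]
    [FiniteDimensional ℝ E] [Nontrivial E] [MeasurableSpace E] [BorelSpace E] {μ : Measure E}
    [μ.IsAddHaarMeasure] {σ : ℝ} (hσ : σ < Module.finrank ℝ E) (c : E) :
    LocallyIntegrable (fun z => ‖z - c‖ ^ (-σ)) μ := by
  have hzero : LocallyIntegrable (fun z : E => ‖z‖ ^ (-σ)) μ := by
    refine locallyIntegrable_of_norm_le_rpow (C := 1) (α := σ) Module.finrank_pos hσ ?_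
      (measurable_norm.pow_const (-σ)).aestronglyMeasurable
    refine Eventually.of_forall fun z => ?_
    rw [Real.norm_of_nonneg (by positivity), one_mul]
  rw [← (measurePreserving_sub_right μ c).map_eq] at hzero
  exact (locallyIntegrable_map_homeomorph (Homeomorph.subRight c)).1 hzero

end Integrals

section Geodesic

variable {i j : Fin N} {x z : ℝ}

theorem rho_zero_left (hz : 0 ≤ z) : rho i j 0 z = z := by
  simp [rho, abs_of_nonneg hz]

theorem rho_nonneg (hx : 0 ≤ x) (hz : 0 ≤ z) : 0 ≤ rho i j x z := by
  unfold rho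
  split_ifs <;> positivity

theorem measurable_rho : Measurable (rho i j x) := by
  unfold rho
  split_ifs <;> fun_prop

/-- Reflecting edge `i` through the junction point places two distinct edges on one line. -/
theorem exists_rho_eq_abs_sub (hx : 0 ≤ x) : ∃ c : ℝ, ∀ z ≥ 0, rho i j x z = |z - c| := by
  by_cases hij : i = j
  · exact ⟨x, fun z _ => by rw [rho, if_pos hij, abs_sub_comm]⟩
  · refine ⟨-x, fun z hz => ?_⟩
    rw [rho, if_neg hij, sub_neg_eq_add, abs_of_nonneg (add_nonneg hz hx), add_comm]

theorem ae_rho_pos (hx : 0 ≤ x) : ∀ᵐ z : ℝ, 0 ≤ z → 0 < rho i j x z := by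
  obtain ⟨c, hc⟩ := exists_rho_eq_abs_sub (i := i) (j := j) hx
  filter_upwards [volume.ae_ne c] with z hzc hz
  rw [hc z hz]
  exact abs_pos.2 (sub_ne_zero.2 hzc)

theorem integrableOn_rho_rpow_neg {σ : ℝ} (hσ : σ < 1) (hx : 0 ≤ x) (b : ℝ) :
    IntegrableOn (fun z => rho i j x z ^ (-σ)) (Icc 0 b) := by
  obtain ⟨c, hc⟩ := exists_rho_eq_abs_sub (i := i) (j := j) hx
  have habs : IntegrableOn (fun z : ℝ => |z - c| ^ (-σ)) (Icc 0 b) :=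
    (locallyIntegrable_norm_sub_rpow_neg (by simpa using hσ) c).integrableOn_isCompact
      isCompact_Icc
  exact habs.congr_fun (fun z hz => by rw [hc z hz.1]) measurableSet_Icc

end Geodesic

section Calm

variable {a : Fin N → ℝ} {u φ : Fin N → ℝ → ℝ} {i : Fin N} {x δ : ℝ}

/-- The one-sided Lipschitz condition `u(z) - u(x) ≤ K ρ(x, z)` at the point with coordinate `x` on
edge `i`: the graph of `u` lies below a cone with vertex at that point. -/
def CalmFromAbove (a : Fin N → ℝ) (u : Fin N → ℝ → ℝ) (i : Fin N) (x : ℝ) : Prop :=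
  ∃ K : ℝ, 0 ≤ K ∧ ∀ j, ∀ z ∈ Icc (0 : ℝ) (a j), u j z - u i x ≤ K * rho i j x z

theorem Compat.neg (hu : Compat u) : Compat (-u) := fun i j => congrArg Neg.neg (hu i j)

theorem C1Fun.neg (hφ : C1Fun a φ) : C1Fun a (-φ) := ⟨hφ.1.neg, fun i => (hφ.2 i).neg⟩

theorem BddFun.neg (hu : BddFun a u) : BddFun a (-u) :=
  let ⟨M, hM⟩ := hu
  ⟨M, fun i x hx => (abs_neg (u i x)).trans_le (hM i x hx)⟩

theorem IsMinOnBall.neg (h : IsMinOnBall a u φ i x δ) : IsMaxOnBall a (-u) (-φ) i x δ := by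
  intro j z hz hlt
  simp only [Pi.neg_apply]
  linarith [h j z hz hlt]

theorem Compat.sub_le_mul_rho {K : NNReal} (hφ : Compat φ)
    (hK : ∀ k, LipschitzOnWith K (φ k) (Icc 0 (a k))) {j : Fin N} {z : ℝ}
    (hx : x ∈ Icc 0 (a i)) (hz : z ∈ Icc 0 (a j)) : φ j z - φ i x ≤ K * rho i j x z := by
  by_cases hij : i = j
  · subst hij
    rw [rho, if_pos rfl, abs_sub_comm]
    exact (le_abs_self _).trans ((hK i).dist_le_mul z hz x hx)
  · have hz0 : φ j z - φ j 0 ≤ K * |z - 0| :=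
      (le_abs_self _).trans ((hK j).dist_le_mul z hz 0 ⟨le_rfl, hz.1.trans hz.2⟩)
    have h0x : φ i 0 - φ i x ≤ K * |0 - x| :=
      (le_abs_self _).trans ((hK i).dist_le_mul 0 ⟨le_rfl, hx.1.trans hx.2⟩ x hx)
    rw [sub_zero, abs_of_nonneg hz.1] at hz0
    rw [zero_sub, abs_neg, abs_of_nonneg hx.1] at h0x
    rw [rho, if_neg hij, mul_add]
    linarith [hφ i j]

theorem C1Fun.calmFromAbove (hφ : C1Fun a φ) (hx : x ∈ Icc 0 (a i)) :
    CalmFromAbove a φ i x := by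
  have hlip (k : Fin N) : ∃ K, LipschitzOnWith K (φ k) (Icc 0 (a k)) :=
    (hφ.2 k).exists_lipschitzOnWith one_ne_zero (convex_Icc _ _) isCompact_Icc
  choose K hK using hlip
  refine ⟨(Finset.univ.sup K : NNReal), NNReal.coe_nonneg _, fun j z hz => ?_⟩
  exact hφ.1.sub_le_mul_rho (fun k => (hK k).weaken (Finset.le_sup (Finset.mem_univ k))) hx hz

theorem IsMaxOnBall.calmFromAbove (hmax : IsMaxOnBall a u φ i x δ) (hδ : 0 < δ)
    (hφ : CalmFromAbove a φ i x) (hu : BddFun a u) (hx : x ∈ Icc 0 (a i)) :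
    CalmFromAbove a u i x := by
  obtain ⟨K, hK, hφK⟩ := hφ
  obtain ⟨M, hM⟩ := hu
  have hM0 : 0 ≤ M := (abs_nonneg _).trans (hM i x hx)
  refine ⟨K + 2 * M / δ, by positivity, fun j z hz => ?_⟩
  have hrho : 0 ≤ rho i j x z := rho_nonneg hx.1 hz.1
  rw [add_mul]
  rcases lt_or_ge (rho i j x z) δ with hnear | hfar
  · have hcone : 0 ≤ 2 * M / δ * rho i j x z := by positivity
    linarith [hmax j z hz hnear, hφK j z hz]
  · have hcone : 2 * M ≤ 2 * M / δ * rho i j x z := by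
      rw [div_mul_eq_mul_div, le_div_iff₀ hδ]
      gcongr
    have hK_rho : 0 ≤ K * rho i j x z := by positivity
    linarith [(abs_le.1 (hM j z hz)).2, (abs_le.1 (hM i x hx)).1]

theorem CalmFromAbove.of_compat (h : CalmFromAbove a u i 0) (hu : Compat u) (i' : Fin N) :
    CalmFromAbove a u i' 0 := by
  obtain ⟨K, hK, huK⟩ := h
  refine ⟨K, hK, fun j z hz => ?_⟩
  rw [hu i' i, rho_zero_left hz.1]
  simpa only [rho_zero_left hz.1] using huK j z hz

end Calm

section NonlocalLimit

variable {a : Fin N → ℝ} {ν : Fin N → Fin N → ℝ → ℝ → ℝ} {Λ σ : ℝ} {u : Fin N → ℝ → ℝ}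
  {i i' : Fin N} {x : ℝ}

theorem KernelBounds.mul_kernel_le (hν : KernelBounds a ν Λ σ) {j : Fin N} (hx : x ∈ Icc 0 (a i))
    {K r d : ℝ} (hr : 0 < r) (hK : 0 ≤ K) (hd : d ≤ K * r) :
    d * ν i j x r ≤ K * Λ * r ^ (-σ) := by
  obtain ⟨hν_nonneg, hν_le, -⟩ := hν i j x hx x hx r hr
  calc d * ν i j x r ≤ K * r * (Λ / r ^ (1 + σ)) := by gcongr
    _ = K * Λ * r ^ (-σ) := by
      rw [Real.rpow_neg hr.le, Real.rpow_add hr, Real.rpow_one]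
      field_simp

theorem CalmFromAbove.tendstoNeTop_edge (hu : CalmFromAbove a u i x) (hσ : σ < 1)
    (hν : KernelBounds a ν Λ σ) (hx : x ∈ Icc 0 (a i)) (j : Fin N) :
    TendstoNeTop (fun δ => ∫ z in Ioo 0 (a j) ∩ ballc i x δ j,
      (u j z - u i x) * ν i j x (rho i j x z)) (𝓝[>] 0) := by
  obtain ⟨K, hK, huK⟩ := hu
  have hpos : ∀ᵐ z ∂volume.restrict (Ioo 0 (a j)), 0 < rho i j x z := by
    filter_upwards [ae_restrict_of_ae (ae_rho_pos hx.1), ae_restrict_mem measurableSet_Ioo]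
      with z hz hzj using hz hzj.1.le
  have hcover := aecover_superlevel (measurable_rho (i := i) (j := j)) hpos
  have hmajorant : IntegrableOn (fun z => K * Λ * rho i j x z ^ (-σ)) (Ioo 0 (a j)) :=
    ((integrableOn_rho_rpow_neg hσ hx.1 (a j)).mono_set Ioo_subset_Icc_self).const_mul _
  have hle : ∀ᵐ z ∂volume.restrict (Ioo 0 (a j)),
      (u j z - u i x) * ν i j x (rho i j x z) ≤ K * Λ * rho i j x z ^ (-σ) := by
    filter_upwards [hpos, ae_restrict_mem measurableSet_Ioo] with z hz hzj
    exact hν.mul_kernel_le hx hz hK (huK j z (Ioo_subset_Icc_self hzj))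
  refine (tendstoNeTop_setIntegral_of_le hcover (fun _ _ hδ _ hz => hδ.trans hz)
    hmajorant hle).congr' (Eventually.of_forall fun δ => ?_)
  dsimp only
  rw [Measure.restrict_restrict (hcover.measurableSet δ), inter_comm]
  rfl

theorem CalmFromAbove.exists_hasNonlocalLimit (hu : CalmFromAbove a u i x) (hσ : σ < 1)
    (hν : KernelBounds a ν Λ σ) (hx : x ∈ Icc 0 (a i)) :
    ∃ L : EReal, HasNonlocalLimit a ν u i x L ∧ L ≠ ⊤ :=
  TendstoNeTop.sum fun j _ => hu.tendstoNeTop_edge hσ hν hx j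

theorem Itr_neg (A : Fin N → Set ℝ) : Itr a ν (-u) i x A = -Itr a ν u i x A := by
  simp only [Itr, Pi.neg_apply, ← Finset.sum_neg_distrib, ← integral_neg]
  refine Finset.sum_congr rfl fun j _ => integral_congr_ae (Eventually.of_forall fun z => ?_)
  ring

theorem HasNonlocalLimit.of_neg {L : EReal} (h : HasNonlocalLimit a ν (-u) i x L) :
    HasNonlocalLimit a ν u i x (-L) := by
  refine ((continuous_neg.tendsto L).comp h).congr fun δ => ?_
  simp only [Function.comp_apply, Itr_neg, EReal.coe_neg, neg_neg]

theorem CalmFromAbove.exists_hasNonlocalLimit_of_compat (h : CalmFromAbove a u i x)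
    (ha : ∀ k, 0 < a k) (hσ : σ < 1) (hν : KernelBounds a ν Λ σ) (hu : Compat u)
    (hx : x ∈ Icc 0 (a i)) (hi : i' = i ∨ x = 0) :
    ∃ L : EReal, HasNonlocalLimit a ν u i' (if i' = i then x else 0) L ∧ L ≠ ⊤ := by
  rcases hi with rfl | rfl
  · rw [if_pos rfl]
    exact h.exists_hasNonlocalLimit hσ hν hx
  · rw [ite_self]
    exact (h.of_compat hu i').exists_hasNonlocalLimit hσ hν ⟨le_rfl, (ha i').le⟩

theorem nonlocal_limit_at_touched_points_general (ha : ∀ k, 0 < a k) (hσ : σ < 1)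
    (hν : KernelBounds a ν Λ σ) (hu : Compat u) (hx : x ∈ Icc 0 (a i)) (hi : i' = i ∨ x = 0) :
    (CalmFromAbove a u i x →
      ∃ L : EReal, HasNonlocalLimit a ν u i' (if i' = i then x else 0) L ∧ L ≠ ⊤) ∧
    (CalmFromAbove a (-u) i x →
      ∃ L : EReal, HasNonlocalLimit a ν u i' (if i' = i then x else 0) L ∧ L ≠ ⊥) := by
  refine ⟨fun h => h.exists_hasNonlocalLimit_of_compat ha hσ hν hu hx hi, fun h => ?_⟩
  obtain ⟨L, hL, hL_top⟩ := h.exists_hasNonlocalLimit_of_compat ha hσ hν hu.neg hx hi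
  exact ⟨-L, hL.of_neg, EReal.neg_eq_bot_iff.not.2 hL_top⟩

end NonlocalLimit

/-- If `u ∈ USC(Γ)` (resp. `LSC(Γ)`) and `φ ∈ C¹(Γ)` are such that `u - φ`
has a local maximum (resp. minimum) at the point with coordinate `x` on edge `i`, then for
every index `i'` of an edge containing this point the limit
`I_{i'} u(x) = lim_{δ↓0} I_{i'}[B_δ^c(x)] u(x)` exists in the extended reals and belongs to
`[-∞, +∞)` (resp. `(-∞, +∞]`). -/
theorem nonlocal_limit_at_touched_points
    {N : ℕ} [NeZero N] (a : Fin N → ℝ) (ha : ∀ i, 0 < a i)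
    (ν : Fin N → Fin N → ℝ → ℝ → ℝ) (Λ σ : ℝ)
    (hΛ : 0 < Λ) (hσ0 : 0 < σ) (hσ1 : σ < 1) (hν : KernelBounds a ν Λ σ)
    (u φ : Fin N → ℝ → ℝ) (hφ : C1Fun a φ) (hb : BddFun a u)
    (i : Fin N) (x : ℝ) (hx : x ∈ Icc (0 : ℝ) (a i)) :
    (USCFun a u → (∃ δ₀ : ℝ, 0 < δ₀ ∧ IsMaxOnBall a u φ i x δ₀) →
      ∀ i' : Fin N, i' = i ∨ x = 0 →
        ∃ L : EReal, HasNonlocalLimit a ν u i' (if i' = i then x else 0) L ∧ L ≠ ⊤)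
    ∧
    (LSCFun a u → (∃ δ₀ : ℝ, 0 < δ₀ ∧ IsMinOnBall a u φ i x δ₀) →
      ∀ i' : Fin N, i' = i ∨ x = 0 →
        ∃ L : EReal, HasNonlocalLimit a ν u i' (if i' = i then x else 0) L ∧ L ≠ ⊥) := by
  refine ⟨fun hu ⟨δ₀, hδ₀, hmax⟩ i' hi => ?_, fun hu ⟨δ₀, hδ₀, hmin⟩ i' hi => ?_⟩
  · exact (nonlocal_limit_at_touched_points_general ha hσ1 hν hu.1 hx hi).1
      (hmax.calmFromAbove hδ₀ (hφ.calmFromAbove hx) hb hx)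
  · exact (nonlocal_limit_at_touched_points_general ha hσ1 hν hu.1 hx hi).2
      (hmin.neg.calmFromAbove hδ₀ (hφ.neg.calmFromAbove hx) hb.neg hx)

end Junction
end

section
/- Assume each H_i(x,·) is convex with a unique minimum point p_i^0(x). For any B ∈ ℝ, every viscosity flux-limited subsolution (respectively supersolution) associated with the flux limiter FL^− built from B is a viscosity subsolution (respectively supersolution) of the Kirchhoff problem λu − I_i u + H_i(x,u_{x_i}) = 0 on E_i, Σ_{i=1}^N −u_{x_i}(O) = B, u_i(a_i) = h_i. -/
open Set MeasureTheory Filter Topology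

namespace Junction

variable {N : ℕ}

/-!
At the junction `H = max H⁺ H⁻`, where `H⁻` is nondecreasing in `p`. For nondecreasing `g_i`, the
min-max `FL = min_q max {max_i g_i(q_i), Σ_i -q_i - B}` satisfies, for every `p`,
`min {min_i g_i(p_i), Σ_i -p_i - B} ≤ FL ≤ max {max_i g_i(p_i), Σ_i -p_i - B}`.
The upper bound is the choice `q = p`. For the lower one, a competitor `q` either has `p_i ≤ q_i`
for some `i`, so that `g_i(p_i) ≤ g_i(q_i)`, or lies below `p` in every coordinate, which increases
`Σ_i -q_i`. Taking `g_i = G_i^{-,δ}` and `p_i = φ_{x_i}(O)`, the lower bound turns the flux-limited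
subsolution inequality into the Kirchhoff one, and the upper bound does so for supersolutions.
-/

section QuasiconvexMinimum

variable {𝕜 β : Type*} [Field 𝕜] [LinearOrder 𝕜] [IsStrictOrderedRing 𝕜] [Preorder β]

theorem monotoneOn_inter_Ici_of_quasiconvexOn_of_isMinOn {s : Set 𝕜} {f : 𝕜 → β} {x : 𝕜}
    (hf : QuasiconvexOn 𝕜 s f) (hx : x ∈ s) (hmin : IsMinOn f s x) :
    MonotoneOn f (s ∩ Ici x) := fun _y hy z hz hyz =>
  ((hf (f z)).ordConnected.out ⟨hx, hmin hz.1⟩ ⟨hz.1, le_rfl⟩ ⟨hy.2, hyz⟩).2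

end QuasiconvexMinimum

section FluxLimiter

variable {ι : Type*} [Fintype ι]

/-- The min-max `min_p max {max_i g_i(p_i), Σ_i -p_i - B}` behind the flux limiter, for arbitrary
functions `g_i` of the slopes. The minimum is written as an infimum, which need not be attained. -/
noncomputable def fluxLimiter (g : ι → ℝ → ℝ) (B : ℝ) : ℝ :=
  ⨅ p : ι → ℝ, max (⨆ i, g i (p i)) ((∑ i, -(p i)) - B)

variable {g : ι → ℝ → ℝ} {B : ℝ}

theorem min_le_fluxLimiter (hg : ∀ i, Monotone (g i)) (p : ι → ℝ) :
    min (⨅ i, g i (p i)) ((∑ i, -(p i)) - B) ≤ fluxLimiter g B := by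
  refine le_ciInf fun q => ?_
  by_cases hpq : ∃ i, p i ≤ q i
  · obtain ⟨i, hi⟩ := hpq
    calc min (⨅ i, g i (p i)) ((∑ i, -(p i)) - B)
      _ ≤ ⨅ i, g i (p i) := min_le_left _ _
      _ ≤ g i (p i) := ciInf_le (finite_range _).bddBelow i
      _ ≤ g i (q i) := hg i hi
      _ ≤ ⨆ i, g i (q i) := le_ciSup (f := fun i => g i (q i)) (finite_range _).bddAbove i
      _ ≤ max (⨆ i, g i (q i)) ((∑ i, -(q i)) - B) := le_max_left _ _
  · have hqp : ∀ i, q i ≤ p i := fun i => (not_le.mp (not_exists.mp hpq i)).le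
    calc min (⨅ i, g i (p i)) ((∑ i, -(p i)) - B)
      _ ≤ (∑ i, -(p i)) - B := min_le_right _ _
      _ ≤ (∑ i, -(q i)) - B := by gcongr with i; exact hqp i
      _ ≤ max (⨆ i, g i (q i)) ((∑ i, -(q i)) - B) := le_max_right _ _

theorem fluxLimiter_le_max {i : ι} (hg : BddBelow (range (g i))) (p : ι → ℝ) :
    fluxLimiter g B ≤ max (⨆ i, g i (p i)) ((∑ i, -(p i)) - B) := by
  obtain ⟨c, hc⟩ := hg
  refine ciInf_le ⟨c, ?_⟩ p
  rintro _ ⟨q, rfl⟩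
  calc c
    _ ≤ g i (q i) := hc (mem_range_self (q i))
    _ ≤ ⨆ i, g i (q i) := le_ciSup (f := fun i => g i (q i)) (finite_range _).bddAbove i
    _ ≤ max (⨆ i, g i (q i)) ((∑ i, -(q i)) - B) := le_max_left _ _

variable [Nonempty ι]

theorem exists_nonpos_or_sum_le_of_fluxLimiter_nonpos (hg : ∀ i, Monotone (g i))
    (hFL : fluxLimiter g B ≤ 0) (p : ι → ℝ) :
    (∃ i, g i (p i) ≤ 0) ∨ (∑ i, -(p i)) ≤ B := by
  obtain ⟨i, hi⟩ := exists_eq_ciInf_of_finite (f := fun i => g i (p i))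
  refine (min_le_iff.mp ((min_le_fluxLimiter hg p).trans hFL)).imp (fun hInf => ⟨i, ?_⟩)
    sub_nonpos.mp
  exact hi.trans_le hInf

theorem exists_nonneg_or_le_sum_of_fluxLimiter_nonneg {i : ι} (hg : BddBelow (range (g i)))
    (hFL : 0 ≤ fluxLimiter g B) (p : ι → ℝ) :
    (∃ i, 0 ≤ g i (p i)) ∨ B ≤ ∑ i, -(p i) := by
  obtain ⟨j, hj⟩ := exists_eq_ciSup_of_finite (f := fun i => g i (p i))
  refine (le_max_iff.mp (hFL.trans (fluxLimiter_le_max hg p))).imp (fun hSup => ⟨j, ?_⟩)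
    sub_nonneg.mp
  exact hSup.trans_eq hj.symm

end FluxLimiter

section HamiltonianParts

variable {H : Fin N → ℝ → ℝ → ℝ} {p0 : Fin N → ℝ → ℝ} {i : Fin N} {x : ℝ}

theorem le_max_Hplus_Hminus (p : ℝ) : H i x p ≤ max (Hplus H p0 i x p) (Hminus H p0 i x p) := by
  unfold Hplus Hminus
  split_ifs
  · exact le_max_left _ _
  · exact le_max_right _ _

theorem Hplus_le (hmin : ∀ p, H i x (p0 i x) ≤ H i x p) (p : ℝ) :
    Hplus H p0 i x p ≤ H i x p := by
  unfold Hplus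
  split_ifs
  · exact le_rfl
  · exact hmin p

theorem Hminus_le (hmin : ∀ p, H i x (p0 i x) ≤ H i x p) (p : ℝ) :
    Hminus H p0 i x p ≤ H i x p := by
  unfold Hminus
  split_ifs
  · exact hmin p
  · exact le_rfl

theorem le_Hminus (hmin : ∀ p, H i x (p0 i x) ≤ H i x p) (p : ℝ) :
    H i x (p0 i x) ≤ Hminus H p0 i x p := by
  unfold Hminus
  split_ifs
  · exact le_rfl
  · exact hmin p

theorem Hminus_eq_max (p : ℝ) : Hminus H p0 i x p = H i x (max (p0 i x) p) := by
  unfold Hminus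
  split_ifs with hp
  · rw [max_eq_left hp]
  · rw [max_eq_right (not_le.mp hp).le]

/-- The paper calls `H⁻` the nonincreasing part of `H`, but as a function of the slope it is
constant up to `p⁰` and then follows the increasing branch. -/
theorem Hminus_monotone (hmono : MonotoneOn (H i x) (Ici (p0 i x))) :
    Monotone (Hminus H p0 i x) := fun p q hpq => by
  simpa only [Hminus_eq_max] using
    hmono (le_max_left _ p) (le_max_left _ q) (max_le_max le_rfl hpq)

end HamiltonianParts

section Operator

variable {lam : ℝ} {a : Fin N → ℝ} {ν : Fin N → Fin N → ℝ → ℝ → ℝ}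
  {H H' : Fin N → ℝ → ℝ → ℝ} {u φ : Fin N → ℝ → ℝ} {p0 : Fin N → ℝ → ℝ} {i : Fin N}
  {p q x δ : ℝ}

theorem G_le_G_iff :
    G lam a ν H u φ p i x δ ≤ G lam a ν H' u φ q i x δ ↔ H i x p ≤ H' i x q := by
  simp only [G, add_le_add_iff_left]

theorem G_nonpos_of_Hplus_of_Hminus (hplus : G lam a ν (Hplus H p0) u φ p i x δ ≤ 0)
    (hminus : G lam a ν (Hminus H p0) u φ p i x δ ≤ 0) : G lam a ν H u φ p i x δ ≤ 0 := by
  rcases le_max_iff.mp (le_max_Hplus_Hminus (H := H) (p0 := p0) (i := i) (x := x) p) with hp | hp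
  · exact (G_le_G_iff.mpr hp).trans hplus
  · exact (G_le_G_iff.mpr hp).trans hminus

end Operator

section JunctionCondition

variable {lam : ℝ} {a : Fin N → ℝ} {ν : Fin N → Fin N → ℝ → ℝ → ℝ}
  {H : Fin N → ℝ → ℝ → ℝ} {p0 : Fin N → ℝ → ℝ} {B : ℝ} {u : Fin N → ℝ → ℝ}

theorem FLdelta_eq_fluxLimiter (φ : Fin N → ℝ → ℝ) (δ : ℝ) :
    FLdelta lam a ν H p0 B u φ δ =
      fluxLimiter (fun i p => G lam a ν (Hminus H p0) u φ p i 0 δ) B :=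
  rfl

variable [NeZero N]

theorem FLSubO.subOPt (hmono : ∀ i, MonotoneOn (H i 0) (Ici (p0 i 0)))
    (hu : FLSubO lam a ν H p0 B u) : SubOPt lam a ν H B u := by
  intro δ hδ φ hφ hφmax
  obtain ⟨hplus, hFL⟩ := hu δ hδ φ hφ hφmax
  rw [FLdelta_eq_fluxLimiter] at hFL
  have hG : ∀ i, Monotone fun p => G lam a ν (Hminus H p0) u φ p i 0 δ := fun i _ _ hpq =>
    G_le_G_iff.mpr (Hminus_monotone (hmono i) hpq)
  refine (exists_nonpos_or_sum_le_of_fluxLimiter_nonpos hG hFL fun i => d1 a φ i 0).imp_left ?_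
  rintro ⟨i, hminus⟩
  exact ⟨i, G_nonpos_of_Hplus_of_Hminus (hplus i) hminus⟩

theorem FLSuperO.superOPt (hmin : ∀ i p, H i 0 (p0 i 0) ≤ H i 0 p)
    (hu : FLSuperO lam a ν H p0 B u) : SuperOPt lam a ν H B u := by
  intro δ hδ φ hφ hφmin
  rcases hu δ hδ φ hφ hφmin with ⟨i, hplus⟩ | hFL
  · exact .inl ⟨i, hplus.trans (G_le_G_iff.mpr (Hplus_le (hmin i) _))⟩
  rw [FLdelta_eq_fluxLimiter] at hFL
  have hG : BddBelow (range fun p => G lam a ν (Hminus H p0) u φ p 0 0 δ) := by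
    refine ⟨G lam a ν H u φ (p0 0 0) 0 0 δ, ?_⟩
    rintro _ ⟨p, rfl⟩
    exact G_le_G_iff.mpr (le_Hminus (hmin 0) p)
  refine (exists_nonneg_or_le_sum_of_fluxLimiter_nonneg hG hFL fun i => d1 a φ i 0).imp_left ?_
  rintro ⟨i, hminus⟩
  exact ⟨i, hminus.trans (G_le_G_iff.mpr (Hminus_le (hmin i) _))⟩

end JunctionCondition

theorem ConvexUniqueMin.monotoneOn_Ici {a : Fin N → ℝ} {H : Fin N → ℝ → ℝ → ℝ}
    {p0 : Fin N → ℝ → ℝ} (hconv : ConvexUniqueMin a H p0) {i : Fin N} {x : ℝ}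
    (hx : x ∈ Icc 0 (a i)) : MonotoneOn (H i x) (Ici (p0 i x)) := by
  obtain ⟨hconvex, hmin, -⟩ := hconv i x hx
  simpa only [univ_inter] using monotoneOn_inter_Ici_of_quasiconvexOn_of_isMinOn
    hconvex.quasiconvexOn (mem_univ (p0 i x)) fun p _ => hmin p

theorem flux_limited_implies_kirchhoff_general [NeZero N] (a : Fin N → ℝ)
    (ν : Fin N → Fin N → ℝ → ℝ → ℝ) (H : Fin N → ℝ → ℝ → ℝ) (p0 : Fin N → ℝ → ℝ)
    (hmin : ∀ i p, H i 0 (p0 i 0) ≤ H i 0 p)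
    (hmono : ∀ i, MonotoneOn (H i 0) (Ici (p0 i 0))) (lam B : ℝ) (h : Fin N → ℝ) :
    (∀ u : Fin N → ℝ → ℝ, FLSub lam a ν H p0 B h u → KirchhoffSub lam a ν H B h u) ∧
    (∀ v : Fin N → ℝ → ℝ, FLSuper lam a ν H p0 B h v → KirchhoffSuper lam a ν H B h v) := by
  constructor
  · rintro u ⟨husc, hedge, hO, hvertex⟩
    exact ⟨⟨husc, hedge, hO.subOPt hmono⟩, hvertex⟩
  · rintro v ⟨hlsc, hedge, hO, hvertex⟩
    exact ⟨⟨hlsc, hedge, hO.superOPt hmin⟩, hvertex⟩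

/-- Every viscosity flux-limited subsolution (resp. supersolution)
associated with the flux limiter `FL⁻` built from `B` is a viscosity subsolution
(resp. supersolution) of the Kirchhoff problem. -/
theorem flux_limited_implies_kirchhoff
    {N : ℕ} [NeZero N] (a : Fin N → ℝ) (ha : ∀ i, 0 < a i)
    (ν : Fin N → Fin N → ℝ → ℝ → ℝ) (Λ σ : ℝ)
    (hΛ : 0 < Λ) (hσ0 : 0 < σ) (hσ1 : σ < 1) (hν : KernelBounds a ν Λ σ)
    (H : Fin N → ℝ → ℝ → ℝ) (CH : ℝ) (hCH : 1 < CH) (hH : HBounds a H CH)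
    (p0 : Fin N → ℝ → ℝ) (hconv : ConvexUniqueMin a H p0)
    (lam : ℝ) (hlam : 0 < lam) (B : ℝ) (h : Fin N → ℝ) :
    (∀ u : Fin N → ℝ → ℝ, FLSub lam a ν H p0 B h u → KirchhoffSub lam a ν H B h u) ∧
    (∀ v : Fin N → ℝ → ℝ, FLSuper lam a ν H p0 B h v → KirchhoffSuper lam a ν H B h v) := by
  have hO : ∀ i, (0 : ℝ) ∈ Icc 0 (a i) := fun i => left_mem_Icc.mpr (ha i).le
  exact flux_limited_implies_kirchhoff_general a ν H p0 (fun i => (hconv i 0 (hO i)).2.1)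
    (fun i => hconv.monotoneOn_Ici (hO i)) lam B h

end Junction
end
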